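/- Fix integers j, k ≥ 1, and l with |l| ≤ k+1 and l ≡ k+1 (mod 2), and let σ be as defined. If S is any one of the three sets [j+l−2k+4, j+l+2k−4]_4, [j+l−2k+2, j+l+σ−2]_2, or [j+l+σ+2, j+l+2k−2]_2, then F_{j,k}|_S ≠ 0. -/

import Mathlib

/-!
Every cover in `P_k` joins an element of `Q_k` to one of `Q_{k+1}`, and the elements sent to `-1`
lie in `Q_{k+1}`. Toggling one of these in an ideal, selected by looking only at the part of the
ideal in `Q_k`, is a sign-reversing involution, so only the ideals without such toggleable
elements survive.

The `Q_k`-parts of the ideals are the corner sum matrices of `k × k` alternating sign matrices. An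
element of `Q_{k+1}` belongs to a position of the matrix; some element at a given position is
toggleable exactly when the entry there is `1`. Intersections of ideals are maxima of corner sums.

The positions marked by `S` form segments reaching one end of their row, or of their column. As
the nonzero entries of a line alternate in sign, the first and the last being `1`, the absence of
`1` on such a segment amounts to inequalities between corner sums which are inherited by maxima.
So the surviving ideals are closed under intersection. Those with the fewest elements in `Q_k`
then have the same `Q_k`-part, which determines their sign, and their terms cannot cancel. A
permutation matrix avoiding the marked positions shows that there are survivors.
-/

open MvPolynomial
open scoped Classical

noncomputable section

/-- The set `Q_k`: triples `(r,s,t)` with `|r|+|s| ≤ k-2`, `r+s ≡ k (mod 2)`,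
`t ≡ 2|s|-k+2 (mod 4)` and `2|s|-k+2 ≤ t ≤ k-2-2|r|`. -/
def pentagramQ (k : ℤ) : Set (ℤ × ℤ × ℤ) :=
  {p | |p.1| + |p.2.1| ≤ k - 2 ∧ (2 : ℤ) ∣ (p.1 + p.2.1 - k) ∧
    (4 : ℤ) ∣ (p.2.2 - (2 * |p.2.1| - k + 2)) ∧
    2 * |p.2.1| - k + 2 ≤ p.2.2 ∧ p.2.2 ≤ k - 2 - 2 * |p.1|}

/-- The set `P_k = Q_k ∪ Q_{k+1}`. -/
def pentagramP (k : ℤ) : Set (ℤ × ℤ × ℤ) := pentagramQ k ∪ pentagramQ (k + 1)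

/-- The covering relation: `(r',s',t')` covers `(r,s,t)` iff `t' = t + 1` and
`|r'-r| + |s'-s| = 1`. -/
def pentagramCovers (x y : ℤ × ℤ × ℤ) : Prop :=
  y.2.2 = x.2.2 + 1 ∧ |y.1 - x.1| + |y.2.1 - x.2.1| = 1

/-- The partial order on `P_k`: the reflexive-transitive closure of the covering
relation within `P_k`. -/
def pentagramLe (k : ℤ) : (ℤ × ℤ × ℤ) → (ℤ × ℤ × ℤ) → Prop :=
  Relation.ReflTransGen
    (fun x y => x ∈ pentagramP k ∧ y ∈ pentagramP k ∧ pentagramCovers x y)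

/-- An order ideal of `P_k`: a downward-closed subset of `P_k`. -/
def IsPentagramOrderIdeal (k : ℤ) (I : Set (ℤ × ℤ × ℤ)) : Prop :=
  I ⊆ pentagramP k ∧ ∀ x y, y ∈ I → pentagramLe k x y → x ∈ I

/-- `P_k` realized as a `Finset` (it is contained in the displayed finite box). -/
def pentagramPFinset (k : ℤ) : Finset (ℤ × ℤ × ℤ) :=
  ((Finset.Icc (-(k-1)) (k-1)) ×ˢ (Finset.Icc (-(k-1)) (k-1)) ×ˢ
    (Finset.Icc (-(k-1)) (k-1))).filter (fun p => p ∈ pentagramP k)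

/-- The F-polynomial `F_{j,k} = Σ_{order ideals I of P_k} Π_{(r,s,t) ∈ I} y_{3r+s+j}`,
as an element of `ℤ[y_i : i ∈ ℤ] = MvPolynomial ℤ ℤ`. -/
def pentagramF (j k : ℤ) : MvPolynomial ℤ ℤ :=
  ∑ I ∈ (pentagramPFinset k).powerset.filter
      (fun I : Finset (ℤ × ℤ × ℤ) => IsPentagramOrderIdeal k (↑I : Set (ℤ × ℤ × ℤ))),
    ∏ p ∈ I, X (3 * p.1 + p.2.1 + j)

/-- The ring endomorphism of `ℤ[y_i : i ∈ ℤ]` sending `y_i ↦ -1` for `i ∈ S`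
and fixing the other variables; `substNeg S F` is `F|_S`. -/
def substNeg (S : Set ℤ) : MvPolynomial ℤ ℤ →+* MvPolynomial ℤ ℤ :=
  (MvPolynomial.aeval
    (fun i : ℤ => if i ∈ S then (-1 : MvPolynomial ℤ ℤ) else X i)).toRingHom

/-- The arithmetic progression `[a,b]_d = {a, a+d, a+2d, …, b}` (as a subset of `ℤ`). -/
def AP (a b d : ℤ) : Set ℤ := {x | a ≤ x ∧ x ≤ b ∧ d ∣ (x - a)}

/-- The shift `σ`: `0` if `k` is odd, `-2` if `k` is even and `l+k ≡ 1 (mod 4)`,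
and `2` if `k` is even and `l+k ≡ 3 (mod 4)`. -/
def pentagramSigma (k l : ℤ) : ℤ :=
  if k % 2 = 1 then 0 else if (l + k) % 4 = 1 then -2 else 2

/-! ### Toggling in a finite ordered set -/

section Toggle

variable {α : Type*} {P : Finset α} {r : α → α → Prop} {q : α → Prop} {A : Set α}
  {I J : Finset α} {x : α}

/-- The order ideals of the finite set `P` ordered by the reflexive-transitive closure of `r`. -/
def orderIdeals (P : Finset α) (r : α → α → Prop) : Finset (Finset α) :=
  {I ∈ P.powerset | ∀ x ∈ P, ∀ y ∈ I, r x y → x ∈ I}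

/-- The element `x` of `P` is toggleable in the order ideal `I` if adding it to `I`, respectively
removing it from `I`, gives an order ideal again. -/
def IsToggleable (P : Finset α) (r : α → α → Prop) (I : Finset α) (x : α) : Prop :=
  x ∈ P ∧ (∀ y ∈ P, r y x → y ∈ I) ∧ ∀ y ∈ P, r x y → y ∉ I

/-- No element of `A` is toggleable in `I`: such ideals are the fixed points of the sign-reversing
involution on order ideals. -/
def IsToggleFree (P : Finset α) (r : α → α → Prop) (A : Set α) (I : Finset α) : Prop :=
  ∀ x ∈ A, ¬ IsToggleable P r I x

lemma mem_orderIdeals :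
    I ∈ orderIdeals P r ↔ I ⊆ P ∧ ∀ x ∈ P, ∀ y ∈ I, r x y → x ∈ I := by
  rw [orderIdeals, Finset.mem_filter, Finset.mem_powerset]

lemma isToggleable_filter (hr : ∀ x y, r x y → (q x ↔ ¬ q y)) (hx : ¬ q x) :
    IsToggleable P r (I.filter q) x ↔ IsToggleable P r I x := by
  have hlower : ∀ y, r y x → q y := fun y hyx => (hr y x hyx).2 hx
  have hupper : ∀ y, r x y → q y := fun y hxy => not_not.1 fun hy => hx ((hr x y hxy).2 hy)
  refine and_congr_right fun _ => and_congr ?_ ?_ <;> refine forall₃_congr fun y _ hyx => ?_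
  · rw [Finset.mem_filter, and_iff_left (hlower y hyx)]
  · rw [Finset.mem_filter, and_iff_left (hupper y hyx)]

lemma inter_mem_orderIdeals [DecidableEq α] (hI : I ∈ orderIdeals P r) (hJ : J ∈ orderIdeals P r) :
    I ∩ J ∈ orderIdeals P r := by
  rw [mem_orderIdeals] at *
  refine ⟨Finset.inter_subset_left.trans hI.1, fun x hx y hy hxy => ?_⟩
  rw [Finset.mem_inter] at *
  exact ⟨hI.2 x hx y hy.1 hxy, hJ.2 x hx y hy.2 hxy⟩

lemma IsToggleable.symmDiff_mem_orderIdeals [DecidableEq α] (hx : IsToggleable P r I x)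
    (hI : I ∈ orderIdeals P r) : symmDiff I {x} ∈ orderIdeals P r := by
  obtain ⟨hxP, hlower, hupper⟩ := hx
  rw [mem_orderIdeals] at *
  refine ⟨fun y hy => ?_, fun y hy z hz hyz => ?_⟩
  · rcases Finset.mem_symmDiff.1 hy with ⟨hyI, -⟩ | ⟨hyx, -⟩
    · exact hI.1 hyI
    · rwa [Finset.mem_singleton.1 hyx]
  · simp only [Finset.mem_symmDiff, Finset.mem_singleton] at hz ⊢
    rcases hz with ⟨hzI, -⟩ | ⟨rfl, hzI⟩
    · exact Or.inl ⟨hI.2 y hy z hzI hyz, fun h => hupper z (hI.1 hzI) (h ▸ hyz) hzI⟩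
    · have hyI := hlower y hy hyz
      exact Or.inl ⟨hyI, fun h => hzI (h ▸ hyI)⟩

lemma prod_symmDiff_singleton [DecidableEq α] {R : Type*} [CommRing R] {w : α → R} (hx : w x = -1)
    (I : Finset α) : ∏ y ∈ symmDiff I {x}, w y = -∏ y ∈ I, w y := by
  by_cases hxI : x ∈ I
  · rw [symmDiff_of_ge (Finset.singleton_subset_iff.2 hxI), Finset.sdiff_singleton_eq_erase,
      ← Finset.mul_prod_erase I w hxI, hx, neg_one_mul, neg_neg]
  · rw [Disjoint.symmDiff_eq_sup (Finset.disjoint_singleton_right.2 hxI), Finset.sup_eq_union,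
      Finset.union_comm, ← Finset.insert_eq, Finset.prod_insert hxI, hx, neg_one_mul]

lemma filter_symmDiff_singleton [DecidableEq α] (hx : ¬ q x) (I : Finset α) :
    (symmDiff I {x}).filter q = I.filter q := by
  ext y
  simp only [Finset.mem_filter, Finset.mem_symmDiff, Finset.mem_singleton]
  refine and_congr_left fun hy => ?_
  have : y ≠ x := fun h => hx (h ▸ hy)
  tauto

lemma exists_toggle_selection [Nonempty α] (P : Finset α)
    (hr : ∀ x y, r x y → (q x ↔ ¬ q y)) (hA : ∀ x ∈ A, ¬ q x) :
    ∃ f : Finset α → α, ∀ I, ¬ IsToggleFree P r A I →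
      f (I.filter q) ∈ A ∧ IsToggleable P r I (f (I.filter q)) := by
  have hsel : ∀ J : Finset α, ∃ x, (∃ y ∈ A, IsToggleable P r J y) →
      x ∈ A ∧ IsToggleable P r J x := by
    intro J
    by_cases h : ∃ y ∈ A, IsToggleable P r J y
    · exact h.imp fun y hy _ => hy
    · exact ⟨Classical.arbitrary α, fun h' => absurd h' h⟩
  choose f hf using hsel
  refine ⟨f, fun I hI => ?_⟩
  simp only [IsToggleFree, not_forall, not_not] at hI
  obtain ⟨x, hxA, hx⟩ := hI
  obtain ⟨hfA, hfI⟩ := hf (I.filter q) ⟨x, hxA, (isToggleable_filter hr (hA x hxA)).2 hx⟩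
  exact ⟨hfA, (isToggleable_filter hr (hA _ hfA)).1 hfI⟩

/-- The toggled element is chosen from the `q`-part of `I` alone, which toggling does not change;
hence toggling twice returns to `I`. -/
theorem sum_prod_eq_sum_toggleFree [Nonempty α] {R : Type*} [CommRing R] {w : α → R}
    (P : Finset α) (hr : ∀ x y, r x y → (q x ↔ ¬ q y)) (hA : ∀ x ∈ A, ¬ q x)
    (hw : ∀ x ∈ A, w x = -1) :
    ∑ I ∈ orderIdeals P r, ∏ x ∈ I, w x =
      ∑ I ∈ orderIdeals P r with IsToggleFree P r A I, ∏ x ∈ I, w x := by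
  obtain ⟨f, hf⟩ := exists_toggle_selection P hr hA
  rw [← Finset.sum_filter_add_sum_filter_not (orderIdeals P r) (IsToggleFree P r A), add_eq_left]
  have hpart : ∀ I, ¬ IsToggleFree P r A I →
      (symmDiff I {f (I.filter q)}).filter q = I.filter q := fun I hI =>
    filter_symmDiff_singleton (hA _ (hf I hI).1) I
  refine Finset.sum_involution (fun I _ => symmDiff I {f (I.filter q)}) ?_ ?_ ?_ ?_ <;>
    intro I hI <;> obtain ⟨hI, hIfree⟩ := Finset.mem_filter.1 hI <;>
    obtain ⟨hfA, hfI⟩ := hf I hIfree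
  · rw [prod_symmDiff_singleton (hw _ hfA), add_neg_cancel]
  · intro _ h
    exact Finset.singleton_ne_empty _ (symmDiff_eq_left.1 h)
  · refine Finset.mem_filter.2 ⟨hfI.symmDiff_mem_orderIdeals hI, fun hfree => hfree _ hfA ?_⟩
    have hq := hA _ hfA
    rwa [← isToggleable_filter hr hq, hpart I hIfree, isToggleable_filter hr hq]
  · simp only [hpart I hIfree, symmDiff_symmDiff_cancel_right]

lemma IsToggleFree.mem_iff (hr : ∀ x y, r x y → (q x ↔ ¬ q y)) (hA : ∀ x ∈ A, ¬ q x)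
    (hI : I ∈ orderIdeals P r) (hfree : IsToggleFree P r A I) (hx : x ∈ A) :
    x ∈ I ↔ x ∈ P ∧ ∃ y ∈ I.filter q, r x y := by
  obtain ⟨hIP, hdown⟩ := mem_orderIdeals.1 hI
  constructor
  · refine fun hxI => ⟨hIP hxI, ?_⟩
    by_contra! hno
    refine hfree x hx ⟨hIP hxI, fun y hy hyx => hdown y hy x hxI hyx, fun y _ hxy hyI => ?_⟩
    have hyq : q y := not_not.1 fun hy => hA x hx ((hr x y hxy).2 hy)
    exact hno y (Finset.mem_filter.2 ⟨hyI, hyq⟩) hxy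
  · rintro ⟨hxP, y, hy, hxy⟩
    exact hdown x hxP y (Finset.mem_filter.1 hy).1 hxy

lemma IsToggleFree.filter_eq (hr : ∀ x y, r x y → (q x ↔ ¬ q y)) (hA : ∀ x ∈ A, ¬ q x)
    (hI : I ∈ orderIdeals P r) (hJ : J ∈ orderIdeals P r) (hfreeI : IsToggleFree P r A I)
    (hfreeJ : IsToggleFree P r A J) (h : I.filter q = J.filter q) :
    I.filter (· ∈ A) = J.filter (· ∈ A) := by
  ext x
  simp only [Finset.mem_filter]
  refine and_congr_left fun hx => ?_
  rw [hfreeI.mem_iff hr hA hI hx, hfreeJ.mem_iff hr hA hJ hx, h]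

/-- The weight recording the size of the `q`-part of an ideal, and the parity of the number of its
elements in `A`. -/
def signedWeight (q : α → Prop) (A : Set α) (x : α) : Polynomial ℤ :=
  if q x then Polynomial.X else if x ∈ A then -1 else 1

lemma prod_signedWeight (hA : ∀ x ∈ A, ¬ q x) (I : Finset α) :
    ∏ x ∈ I, signedWeight q A x =
      Polynomial.C ((-1) ^ (I.filter (· ∈ A)).card) * Polynomial.X ^ (I.filter q).card := by
  have hsplit : ∀ x, signedWeight q A x =
      (if x ∈ A then -1 else 1) * (if q x then Polynomial.X else 1) := by
    intro x
    unfold signedWeight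
    by_cases hx : x ∈ A
    · simp [hx, hA x hx]
    · simp [hx]
  simp only [hsplit, Finset.prod_mul_distrib, ← Finset.prod_filter, Finset.prod_const]
  simp

lemma filter_eq_filter_of_card_le_card_inter [DecidableEq α]
    (hI : (I.filter q).card ≤ ((I ∩ J).filter q).card)
    (hJ : (J.filter q).card ≤ ((I ∩ J).filter q).card) : I.filter q = J.filter q := by
  have hleft : (I ∩ J).filter q = I.filter q :=
    Finset.eq_of_subset_of_card_le (Finset.filter_subset_filter _ Finset.inter_subset_left) hI
  have hright : (I ∩ J).filter q = J.filter q :=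
    Finset.eq_of_subset_of_card_le (Finset.filter_subset_filter _ Finset.inter_subset_right) hJ
  rw [← hleft, hright]

/-- If `I₀` has the fewest elements satisfying `q`, any other toggle-free ideal with as many such
elements agrees with `I₀` on them, by minimality of the intersection. All these ideals contribute
the same sign to one coefficient. -/
theorem sum_signedWeight_ne_zero [DecidableEq α] [Nonempty α] (hr : ∀ x y, r x y → (q x ↔ ¬ q y))
    (hA : ∀ x ∈ A, ¬ q x) (hex : ∃ I ∈ orderIdeals P r, IsToggleFree P r A I)
    (hinter : ∀ I ∈ orderIdeals P r, ∀ J ∈ orderIdeals P r, IsToggleFree P r A I →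
      IsToggleFree P r A J → IsToggleFree P r A (I ∩ J)) :
    ∑ I ∈ orderIdeals P r, ∏ x ∈ I, signedWeight q A x ≠ 0 := by
  set F := {I ∈ orderIdeals P r | IsToggleFree P r A I}
  obtain ⟨I₀, hI₀, hmin⟩ := F.exists_min_image (fun I => (I.filter q).card)
    (hex.imp fun I hI => Finset.mem_filter.2 hI)
  obtain ⟨hI₀ideal, hI₀free⟩ := Finset.mem_filter.1 hI₀
  have hpart : ∀ I ∈ F, (I.filter q).card = (I₀.filter q).card → I.filter q = I₀.filter q := by
    intro I hI hcard
    obtain ⟨hIideal, hIfree⟩ := Finset.mem_filter.1 hI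
    have hle := hmin (I ∩ I₀) (Finset.mem_filter.2 ⟨inter_mem_orderIdeals hIideal hI₀ideal,
      hinter I hIideal I₀ hI₀ideal hIfree hI₀free⟩)
    exact filter_eq_filter_of_card_le_card_inter (hcard.trans_le hle) hle
  have hcoeff : ∀ I ∈ F, (∏ x ∈ I, signedWeight q A x).coeff (I₀.filter q).card =
      if (I.filter q).card = (I₀.filter q).card then (-1) ^ (I₀.filter (· ∈ A)).card else 0 := by
    intro I hI
    rw [prod_signedWeight hA, Polynomial.coeff_C_mul_X_pow]
    simp only [eq_comm (a := (I₀.filter q).card)]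
    refine if_ctx_congr Iff.rfl (fun h => ?_) fun _ => rfl
    obtain ⟨hIideal, hIfree⟩ := Finset.mem_filter.1 hI
    rw [hIfree.filter_eq hr hA hIideal hI₀ideal hI₀free (hpart I hI h)]
  have hw : ∀ x ∈ A, signedWeight q A x = -1 := fun x hx => by
    rw [signedWeight, if_neg (hA x hx), if_pos hx]
  rw [sum_prod_eq_sum_toggleFree P hr hA hw]
  intro h
  have hzero := congrArg (Polynomial.coeff · (I₀.filter q).card) h
  simp only [Polynomial.finsetSum_coeff, Polynomial.coeff_zero] at hzero
  rw [Finset.sum_congr rfl hcoeff, ← Finset.sum_filter, Finset.sum_const, smul_eq_zero] at hzero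
  have hcard : (F.filter fun I => (I.filter q).card = (I₀.filter q).card).card ≠ 0 :=
    Finset.card_ne_zero_of_mem (Finset.mem_filter.2 ⟨hI₀, rfl⟩)
  exact hzero.elim hcard (pow_ne_zero _ (neg_ne_zero.2 one_ne_zero))

end Toggle

/-! ### Corner sums of alternating sign matrices -/

section CornerSum

variable {k : ℤ} {C C' : ℤ → ℤ → ℤ} {T : Set (ℤ × ℤ)}

/-- The corner sum matrices of order `k`, characterising the `k × k` alternating sign matrices:
`C i b` is the sum of the entries in the first `i` rows and the first `b` columns. -/
structure IsCornerSum (k : ℤ) (C : ℤ → ℤ → ℤ) : Prop where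
  bounds : ∀ i b, 0 ≤ i → i ≤ k → 0 ≤ b → b ≤ k →
    0 ≤ C i b ∧ i + b - k ≤ C i b ∧ C i b ≤ i ∧ C i b ≤ b
  row_step : ∀ i b, 0 ≤ i → i ≤ k → 0 ≤ b → b < k → C i b ≤ C i (b + 1) ∧ C i (b + 1) ≤ C i b + 1
  col_step : ∀ i b, 0 ≤ i → i < k → 0 ≤ b → b ≤ k → C i b ≤ C (i + 1) b ∧ C (i + 1) b ≤ C i b + 1

/-- The entry in row `a` and column `b`, both numbered from `0`, of the matrix with corner
sums `C`. -/
def asmEntry (C : ℤ → ℤ → ℤ) (a b : ℤ) : ℤ :=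
  C (a + 1) (b + 1) - C (a + 1) b - C a (b + 1) + C a b

/-- The alternating sign matrix with corner sums `C` has no entry `1` at the positions in `T`. -/
def HasNoOneOn (T : Set (ℤ × ℤ)) (C : ℤ → ℤ → ℤ) : Prop :=
  ∀ a b, (a, b) ∈ T → asmEntry C a b ≠ 1

/-- Each position in `T` is joined to the left or the right end of its row by positions in `T`. -/
def JoinsRowEnds (k : ℤ) (T : Set (ℤ × ℤ)) : Prop :=
  ∀ a b, (a, b) ∈ T → (∀ b', 0 ≤ b' → b' ≤ b → (a, b') ∈ T) ∨ ∀ b', b ≤ b' → b' < k → (a, b') ∈ T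

lemma asmEntry_transpose (C : ℤ → ℤ → ℤ) (a b : ℤ) :
    asmEntry (fun i b => C b i) a b = asmEntry C b a := by
  unfold asmEntry
  ring

lemma IsCornerSum.transpose (hC : IsCornerSum k C) : IsCornerSum k (fun i b => C b i) where
  bounds i b hi hik hb hbk := by
    have := hC.bounds b i hb hbk hi hik
    omega
  row_step i b hi hik hb hbk := hC.col_step b i hb hbk hi hik
  col_step i b hi hik hb hbk := hC.row_step b i hb hbk hi hik

lemma IsCornerSum.max (hC : IsCornerSum k C) (hC' : IsCornerSum k C') :
    IsCornerSum k (fun i b => max (C i b) (C' i b)) where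
  bounds i b hi hik hb hbk := by
    have := hC.bounds i b hi hik hb hbk
    have := hC'.bounds i b hi hik hb hbk
    omega
  row_step i b hi hik hb hbk := by
    have := hC.row_step i b hi hik hb hbk
    have := hC'.row_step i b hi hik hb hbk
    omega
  col_step i b hi hik hb hbk := by
    have := hC.col_step i b hi hik hb hbk
    have := hC'.col_step i b hi hik hb hbk
    omega

/-- The nonzero entries of a row alternate in sign and the first of them is `1`. -/
lemma IsCornerSum.le_of_prefix_ne_one (hC : IsCornerSum k C) {a b : ℤ} (ha : 0 ≤ a) (hak : a < k)
    (hb : 0 ≤ b) (hbk : b ≤ k) (h : ∀ b', 0 ≤ b' → b' < b → asmEntry C a b' ≠ 1) :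
    C (a + 1) b ≤ C a b := by
  induction b, hb using Int.leInduction with
  | base =>
    have := hC.bounds a 0 ha hak.le le_rfl hbk
    have := hC.bounds (a + 1) 0 (by omega) hak le_rfl hbk
    omega
  | succ b hb ih =>
    have hbefore := ih (by omega) fun b' hb' hlt => h b' hb' (by omega)
    have hentry := h b hb (by omega)
    have := hC.col_step a b ha hak hb (by omega)
    have := hC.col_step a (b + 1) ha hak (by omega) hbk
    unfold asmEntry at hentry
    omega

/-- The nonzero entries of a row alternate in sign and the last of them is `1`. -/
lemma IsCornerSum.lt_of_suffix_ne_one (hC : IsCornerSum k C) {a b : ℤ} (ha : 0 ≤ a) (hak : a < k)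
    (hb : 0 ≤ b) (hbk : b ≤ k) (h : ∀ b', b ≤ b' → b' < k → asmEntry C a b' ≠ 1) :
    C a b < C (a + 1) b := by
  induction b, hbk using Int.leInductionDown with
  | base =>
    have := hC.bounds a k ha hak.le hb le_rfl
    have := hC.bounds (a + 1) k (by omega) hak hb le_rfl
    omega
  | pred b hbk ih =>
    have hafter := ih (by omega) fun b' hb' hlt => h b' (by omega) hlt
    have hentry := h (b - 1) le_rfl (by omega)
    have := hC.col_step a b ha hak (by omega) hbk
    have := hC.col_step a (b - 1) ha hak hb (by omega)
    simp only [asmEntry, sub_add_cancel] at hentry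
    omega

/-- In a row segment starting at one of the ends, having no entry `1` is a condition on partial sums
(`le_of_prefix_ne_one`, `lt_of_suffix_ne_one`), and these conditions are inherited by maxima. -/
theorem HasNoOneOn.max_of_joinsRowEnds (hC : IsCornerSum k C) (hC' : IsCornerSum k C')
    (hTk : T ⊆ Set.Ico 0 k ×ˢ Set.Ico 0 k) (hT : JoinsRowEnds k T)
    (h : HasNoOneOn T C) (h' : HasNoOneOn T C') :
    HasNoOneOn T (fun i b => max (C i b) (C' i b)) := by
  intro a b hab
  obtain ⟨⟨ha, hak⟩, hb, hbk⟩ := hTk hab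
  have hmax := (hC.max hC').col_step a b ha hak hb hbk.le
  have hmax' := (hC.max hC').col_step a (b + 1) ha hak (by omega) hbk
  have hle : (∀ b', 0 ≤ b' → b' ≤ b → (a, b') ∈ T) →
      C (a + 1) (b + 1) ≤ C a (b + 1) ∧ C' (a + 1) (b + 1) ≤ C' a (b + 1) := fun hleft =>
    ⟨hC.le_of_prefix_ne_one ha hak (by omega) hbk
      fun b' hb' hlt => h a b' (hleft b' hb' (by omega)),
     hC'.le_of_prefix_ne_one ha hak (by omega) hbk
      fun b' hb' hlt => h' a b' (hleft b' hb' (by omega))⟩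
  have hlt : (∀ b', b ≤ b' → b' < k → (a, b') ∈ T) →
      C a b < C (a + 1) b ∧ C' a b < C' (a + 1) b := fun hright =>
    ⟨hC.lt_of_suffix_ne_one ha hak hb hbk.le fun b' hb' hlt => h a b' (hright b' hb' hlt),
     hC'.lt_of_suffix_ne_one ha hak hb hbk.le fun b' hb' hlt => h' a b' (hright b' hb' hlt)⟩
  unfold asmEntry
  beta_reduce at hmax hmax' ⊢
  rcases hT a b hab with hleft | hright
  · have := hle hleft
    omega
  · have := hlt hright
    omega

theorem HasNoOneOn.max_of_joinsColEnds (hC : IsCornerSum k C) (hC' : IsCornerSum k C')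
    (hTk : T ⊆ Set.Ico 0 k ×ˢ Set.Ico 0 k)
    (hT : JoinsRowEnds k (Prod.swap ⁻¹' T)) (h : HasNoOneOn T C) (h' : HasNoOneOn T C') :
    HasNoOneOn T (fun i b => max (C i b) (C' i b)) := by
  have hswap : ∀ {D}, HasNoOneOn T D → HasNoOneOn (Prod.swap ⁻¹' T) (fun i b => D b i) :=
    fun hD a b hab => by
      rw [asmEntry_transpose]
      exact hD b a hab
  intro a b hab
  rw [← asmEntry_transpose]
  have hswapk := (Set.preimage_mono hTk).trans (Set.preimage_swap_prod _ _).subset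
  exact (hswap h).max_of_joinsRowEnds hC.transpose hC'.transpose hswapk hT (hswap h') b a hab

/-- The corner sums of the permutation matrix with an entry `1` in row `π b` of each column `b`. -/
def permCornerSum (π : ℤ → ℤ) (i b : ℤ) : ℤ :=
  ({x ∈ Finset.Ico 0 b | π x < i} : Finset ℤ).card

lemma permCornerSum_add_one (π : ℤ → ℤ) (i : ℤ) {b : ℤ} (hb : 0 ≤ b) :
    permCornerSum π i (b + 1) = permCornerSum π i b + if π b < i then 1 else 0 := by
  have hIco : Finset.Ico 0 (b + 1) = insert b (Finset.Ico 0 b) := by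
    ext x
    simp only [Finset.mem_insert, Finset.mem_Ico]
    omega
  rw [permCornerSum, permCornerSum, hIco, Finset.filter_insert]
  split_ifs
  · rw [Finset.card_insert_of_notMem (by simp), Nat.cast_add_one]
  · rw [add_zero]

lemma asmEntry_permCornerSum (π : ℤ → ℤ) (a : ℤ) {b : ℤ} (hb : 0 ≤ b) :
    asmEntry (permCornerSum π) a b = if π b = a then 1 else 0 := by
  rw [asmEntry, permCornerSum_add_one π _ hb, permCornerSum_add_one π _ hb]
  split_ifs <;> omega

lemma permCornerSum_full {π : ℤ → ℤ} (hmaps : Set.MapsTo π (Set.Ico 0 k) (Set.Ico 0 k))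
    (hinj : Set.InjOn π (Set.Ico 0 k)) {i : ℤ} (hi : 0 ≤ i) (hik : i ≤ k) :
    permCornerSum π i k = i := by
  have himage : (Finset.Ico 0 k).image π = Finset.Ico 0 k := by
    refine Finset.eq_of_subset_of_card_le (fun x hx => ?_) ?_
    · obtain ⟨y, hy, rfl⟩ := Finset.mem_image.1 hx
      exact Finset.mem_Ico.2 (hmaps (Finset.mem_Ico.1 hy))
    · rw [Finset.card_image_of_injOn (by rwa [Finset.coe_Ico])]
  have hbelow : ({x ∈ Finset.Ico 0 k | π x < i} : Finset ℤ).image π = Finset.Ico 0 i := by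
    rw [← Finset.filter_image (f := π) (p := (· < i)), himage]
    ext x
    simp only [Finset.mem_filter, Finset.mem_Ico]
    omega
  rw [permCornerSum, ← Finset.card_image_of_injOn (f := π), hbelow, Int.card_Ico, sub_zero,
    Int.toNat_of_nonneg hi]
  exact hinj.mono fun x hx => by simpa using (Finset.mem_filter.1 hx).1

lemma isCornerSum_permCornerSum {π : ℤ → ℤ} (hmaps : Set.MapsTo π (Set.Ico 0 k) (Set.Ico 0 k))
    (hinj : Set.InjOn π (Set.Ico 0 k)) : IsCornerSum k (permCornerSum π) where
  bounds i b hi hik hb hbk := by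
    have hfull := permCornerSum_full hmaps hinj hi hik
    have hIco : Finset.Ico 0 b ∪ Finset.Ico b k = Finset.Ico 0 k :=
      Finset.Ico_union_Ico_eq_Ico hb hbk
    have hcard := Finset.card_union_le ({x ∈ Finset.Ico 0 b | π x < i} : Finset ℤ)
      {x ∈ Finset.Ico b k | π x < i}
    rw [← Finset.filter_union, hIco] at hcard
    have hsub := Finset.card_le_card (Finset.filter_subset_filter (π · < i)
      (hIco ▸ Finset.subset_union_left : Finset.Ico 0 b ⊆ Finset.Ico 0 k))
    have hleft := Finset.card_filter_le (Finset.Ico 0 b) (π · < i)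
    have hright := Finset.card_filter_le (Finset.Ico b k) (π · < i)
    rw [Int.card_Ico] at hleft hright
    unfold permCornerSum at hfull ⊢
    omega
  row_step i b _ _ hb _ := by
    rw [permCornerSum_add_one π i hb]
    split_ifs <;> omega
  col_step i b _ _ _ hbk := by
    have hsplit : ({x ∈ Finset.Ico 0 b | π x < i + 1} : Finset ℤ) =
        {x ∈ Finset.Ico 0 b | π x < i} ∪ {x ∈ Finset.Ico 0 b | π x = i} := by
      rw [← Finset.filter_or]
      simp only [Int.lt_add_one_iff, le_iff_lt_or_eq]
    have hsub := Finset.card_le_card (hsplit ▸ Finset.subset_union_left)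
    have hcard := Finset.card_union_le ({x ∈ Finset.Ico 0 b | π x < i} : Finset ℤ)
      {x ∈ Finset.Ico 0 b | π x = i}
    have hone : ({x ∈ Finset.Ico 0 b | π x = i} : Finset ℤ).card ≤ 1 := by
      refine Finset.card_le_one.2 fun x hx y hy => hinj ?_ ?_ ?_ <;>
        simp only [Finset.mem_filter, Finset.mem_Ico, Set.mem_Ico] at hx hy ⊢ <;> omega
    rw [← hsplit] at hcard
    unfold permCornerSum
    omega

end CornerSum

/-! ### Order ideals as corner sums -/

section Coordinates

variable {j k : ℤ} {S : Set ℤ} {x y : ℤ × ℤ × ℤ} {a b c i : ℤ} {C C' : ℤ → ℤ → ℤ}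
  {I J : Finset (ℤ × ℤ × ℤ)}

/-- The elements of `Q_k` in matrix coordinates: those with the same `i` and `b` form a chain, to be
cut at the corner sum of the first `i` rows and the first `b` columns. Increasing `c` lowers the
element. -/
def cornerPt (k i b c : ℤ) : ℤ × ℤ × ℤ := (i + b - k, i - b, 2 * (i + b) - k + 2 - 4 * c)

/-- The elements of `Q_{k+1}` in matrix coordinates: those with the same `a` and `b` belong to the
matrix entry in row `a` and column `b`, both numbered from `0`. -/
def entryPt (k a b c : ℤ) : ℤ × ℤ × ℤ := cornerPt (k + 1) (a + 1) (b + 1) c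

/-- The parity condition which singles out `Q_k` in `P_k`. -/
def IsCornerPoint (k : ℤ) (x : ℤ × ℤ × ℤ) : Prop := 2 ∣ x.1 + x.2.1 - k

/-- The elements whose variable `y_{3r+s+j}` is sent to `-1` when restricting to `S`. -/
def markedElements (j : ℤ) (S : Set ℤ) : Set (ℤ × ℤ × ℤ) := {x | 3 * x.1 + x.2.1 + j ∈ S}

/-- The positions of a `k × k` matrix whose elements `entryPt` are in `markedElements j S`. -/
def markedPositions (j k : ℤ) (S : Set ℤ) : Set (ℤ × ℤ) :=
  {p | p ∈ Set.Ico 0 k ×ˢ Set.Ico 0 k ∧ 4 * p.1 + 2 * p.2 + 3 - 3 * k + j ∈ S}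

lemma cornerPt_inj {i' b' c' : ℤ} :
    cornerPt k i b c = cornerPt k i' b' c' ↔ i = i' ∧ b = b' ∧ c = c' := by
  simp only [cornerPt, Prod.mk.injEq]
  omega

lemma cornerPt_mem_pentagramQ :
    cornerPt k i b c ∈ pentagramQ k ↔ 0 < c ∧ i + b - k < c ∧ c ≤ i ∧ c ≤ b := by
  simp only [cornerPt, pentagramQ, Set.mem_ofPred_eq, abs_eq_max_neg]
  omega

lemma exists_eq_cornerPt (hx : x ∈ pentagramQ k) : ∃ i b c, x = cornerPt k i b c := by
  obtain ⟨r, s, t⟩ := x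
  simp only [pentagramQ, Set.mem_ofPred_eq, abs_eq_max_neg] at hx
  refine ⟨(k + r + s) / 2, (k + r - s) / 2, (k + 2 * r + 2 - t) / 4, ?_⟩
  simp only [cornerPt, Prod.mk.injEq]
  omega

lemma isCornerPoint_of_mem_pentagramQ (hx : x ∈ pentagramQ k) : IsCornerPoint k x := hx.2.1

lemma isCornerPoint_cornerPt (k i b c : ℤ) : IsCornerPoint k (cornerPt k i b c) := by
  simp only [IsCornerPoint, cornerPt]
  omega

lemma not_isCornerPoint_entryPt (k a b c : ℤ) : ¬ IsCornerPoint k (entryPt k a b c) := by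
  simp only [IsCornerPoint, entryPt, cornerPt]
  omega

lemma isCornerPoint_iff_not_of_covers (h : pentagramCovers x y) :
    IsCornerPoint k x ↔ ¬ IsCornerPoint k y := by
  simp only [pentagramCovers, abs_eq_max_neg] at h
  unfold IsCornerPoint
  omega

lemma mem_pentagramPFinset : x ∈ pentagramPFinset k ↔ x ∈ pentagramP k := by
  rw [pentagramPFinset, Finset.mem_filter, and_iff_right_iff_imp]
  intro hx
  simp only [pentagramP, pentagramQ, Set.mem_union, Set.mem_ofPred_eq, abs_eq_max_neg] at hx
  simp only [Finset.mem_product, Finset.mem_Icc]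
  omega

lemma cornerPt_mem_pentagramPFinset :
    cornerPt k i b c ∈ pentagramPFinset k ↔ 0 < c ∧ i + b - k < c ∧ c ≤ i ∧ c ≤ b := by
  rw [mem_pentagramPFinset, pentagramP, Set.mem_union, cornerPt_mem_pentagramQ, or_iff_left]
  intro h
  have := isCornerPoint_of_mem_pentagramQ h
  simp only [IsCornerPoint, cornerPt] at this
  omega

lemma entryPt_mem_pentagramPFinset :
    entryPt k a b c ∈ pentagramPFinset k ↔ 0 < c ∧ a + b + 1 - k < c ∧ c ≤ a + 1 ∧ c ≤ b + 1 := by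
  rw [mem_pentagramPFinset, pentagramP, Set.mem_union, or_iff_right, entryPt,
    cornerPt_mem_pentagramQ]
  · omega
  · exact fun h => not_isCornerPoint_entryPt k a b c (isCornerPoint_of_mem_pentagramQ h)

lemma exists_eq_cornerPt_of_isCornerPoint (hx : x ∈ pentagramPFinset k) (hxk : IsCornerPoint k x) :
    ∃ i b c, x = cornerPt k i b c := by
  rcases mem_pentagramPFinset.1 hx with hx | hx
  · exact exists_eq_cornerPt hx
  · have := isCornerPoint_of_mem_pentagramQ hx
    unfold IsCornerPoint at this hxk
    omega

lemma exists_eq_entryPt_of_not_isCornerPoint (hx : x ∈ pentagramPFinset k)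
    (hxk : ¬ IsCornerPoint k x) :
    ∃ a b c, x = entryPt k a b c := by
  rcases mem_pentagramPFinset.1 hx with hx | hx
  · exact absurd (isCornerPoint_of_mem_pentagramQ hx) hxk
  · obtain ⟨i, b, c, rfl⟩ := exists_eq_cornerPt hx
    exact ⟨i - 1, b - 1, c, by simp only [entryPt, sub_add_cancel]⟩

lemma covers_entryPt_iff (hx : x ∈ pentagramPFinset k) :
    pentagramCovers x (entryPt k a b c) ↔
      x = cornerPt k (a + 1) b c ∨ x = cornerPt k a (b + 1) c := by
  constructor
  · intro h
    obtain ⟨i, b', c', rfl⟩ := exists_eq_cornerPt_of_isCornerPoint hx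
      ((isCornerPoint_iff_not_of_covers h).2 (not_isCornerPoint_entryPt k a b c))
    simp only [pentagramCovers, entryPt, cornerPt, Prod.mk.injEq, abs_eq_max_neg] at h ⊢
    omega
  · rintro (rfl | rfl) <;> simp only [pentagramCovers, entryPt, cornerPt, abs_eq_max_neg] <;> omega

lemma entryPt_covers_iff (hx : x ∈ pentagramPFinset k) :
    pentagramCovers (entryPt k a b c) x ↔
      x = cornerPt k (a + 1) (b + 1) c ∨ x = cornerPt k a b (c - 1) := by
  constructor
  · intro h
    obtain ⟨i, b', c', rfl⟩ := exists_eq_cornerPt_of_isCornerPoint hx <| not_not.1 fun hxk =>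
      not_isCornerPoint_entryPt k a b c ((isCornerPoint_iff_not_of_covers h).2 hxk)
    simp only [pentagramCovers, entryPt, cornerPt, Prod.mk.injEq, abs_eq_max_neg] at h ⊢
    omega
  · rintro (rfl | rfl) <;> simp only [pentagramCovers, entryPt, cornerPt, abs_eq_max_neg] <;> omega

lemma isPentagramOrderIdeal_iff (hI : I ⊆ pentagramPFinset k) :
    IsPentagramOrderIdeal k I ↔ I ∈ orderIdeals (pentagramPFinset k) pentagramCovers := by
  have hIP : (I : Set (ℤ × ℤ × ℤ)) ⊆ pentagramP k := fun x hx => mem_pentagramPFinset.1 (hI hx)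
  rw [IsPentagramOrderIdeal, mem_orderIdeals, and_iff_right hIP, and_iff_right hI]
  constructor
  · exact fun h x hx y hy hxy =>
      h x y hy (Relation.ReflTransGen.single ⟨mem_pentagramPFinset.1 hx, hIP hy, hxy⟩)
  · intro h x y hy hxy
    induction hxy using Relation.ReflTransGen.head_induction_on with
    | refl => exact hy
    | head hcov _ ih => exact h _ (mem_pentagramPFinset.2 hcov.1) _ ih hcov.2.2

lemma pentagramF_eq_sum_orderIdeals (j k : ℤ) :
    pentagramF j k = ∑ I ∈ orderIdeals (pentagramPFinset k) pentagramCovers,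
      ∏ x ∈ I, X (3 * x.1 + x.2.1 + j) := by
  rw [pentagramF]
  refine Finset.sum_congr (Finset.ext fun I => ?_) fun _ _ => rfl
  rw [Finset.mem_filter, Finset.mem_powerset]
  constructor
  · exact fun ⟨hI, hideal⟩ => (isPentagramOrderIdeal_iff hI).1 hideal
  · intro hI
    have hIP := (mem_orderIdeals.1 hI).1
    exact ⟨hIP, (isPentagramOrderIdeal_iff hIP).2 hI⟩

/-- The matrix `C` records the elements of `Q_k` in `I`: in each chain `cornerPt k i b c` exactly
those with `C i b < c`. -/
structure HasCornerSum (k : ℤ) (I : Finset (ℤ × ℤ × ℤ)) (C : ℤ → ℤ → ℤ) : Prop where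
  isCornerSum : IsCornerSum k C
  mem_iff : ∀ i b c, cornerPt k i b c ∈ pentagramPFinset k → (cornerPt k i b c ∈ I ↔ C i b < c)

lemma HasCornerSum.inter (hI : HasCornerSum k I C) (hJ : HasCornerSum k J C') :
    HasCornerSum k (I ∩ J) (fun i b => max (C i b) (C' i b)) where
  isCornerSum := hI.isCornerSum.max hJ.isCornerSum
  mem_iff i b c hP := by
    rw [Finset.mem_inter, hI.mem_iff i b c hP, hJ.mem_iff i b c hP, max_lt_iff]

lemma cornerPt_mem_of_neighbor_mem (hI : I ∈ orderIdeals (pentagramPFinset k) pentagramCovers)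
    (hP : cornerPt k i b c ∈ pentagramPFinset k)
    (h : cornerPt k i (b + 1) c ∈ I ∨ cornerPt k (i + 1) b c ∈ I ∨
      cornerPt k i (b - 1) (c - 1) ∈ I ∨ cornerPt k (i - 1) b (c - 1) ∈ I) :
    cornerPt k i b c ∈ I := by
  obtain ⟨hIP, hdown⟩ := mem_orderIdeals.1 hI
  have hvia : ∀ a b' y, y ∈ I → cornerPt k i b c = cornerPt k (a + 1) b' c ∨
      cornerPt k i b c = cornerPt k a (b' + 1) c → y = cornerPt k (a + 1) (b' + 1) c ∨
      y = cornerPt k a b' (c - 1) → entryPt k a b' c ∈ pentagramPFinset k →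
      cornerPt k i b c ∈ I := fun a b' y hy hlower hupper hentry =>
    hdown _ hP _ (hdown _ hentry y hy ((entryPt_covers_iff (hIP hy)).2 hupper))
      ((covers_entryPt_iff hP).2 hlower)
  simp only [cornerPt_mem_pentagramPFinset, entryPt_mem_pentagramPFinset] at hP hvia
  rcases h with h | h | h | h <;> have hy := cornerPt_mem_pentagramPFinset.1 (hIP h)
  · exact hvia (i - 1) b _ h (by simp) (by simp) (by omega)
  · exact hvia i (b - 1) _ h (by simp) (by simp) (by omega)
  · exact hvia i (b - 1) _ h (by simp) (by simp) (by omega)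
  · exact hvia (i - 1) b _ h (by simp) (by simp) (by omega)

lemma exists_threshold_of_succ {p : ℤ → Prop} {lo hi : ℤ} (hle : lo ≤ hi)
    (hp : ∀ c, lo < c → c < hi → p c → p (c + 1)) :
    ∃ d, lo ≤ d ∧ d ≤ hi ∧ ∀ c, lo < c → c ≤ hi → (p c ↔ d < c) := by
  induction hi, hle using Int.leInduction with
  | base => exact ⟨lo, le_rfl, le_rfl, fun c hlt hge => absurd hlt hge.not_gt⟩
  | succ hi hle ih =>
    obtain ⟨d, hlod, hdhi, hd⟩ := ih fun c hlo hlt => hp c hlo (by omega)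
    by_cases htop : p (hi + 1)
    · refine ⟨d, hlod, by omega, fun c hlo hc => ?_⟩
      rcases hc.lt_or_eq with hlt | rfl
      · exact hd c hlo (by omega)
      · exact iff_of_true htop (by omega)
    · refine ⟨hi + 1, by omega, le_rfl, fun c hlo hc => iff_of_false (fun hpc => ?_) hc.not_gt⟩
      rcases hc.lt_or_eq with hlt | rfl
      · have hdc := (hd c hlo (by omega)).1 hpc
        exact htop (hp hi (by omega) (by omega) ((hd hi (by omega) le_rfl).2 (by omega)))
      · exact htop hpc

lemma exists_chain_threshold (hI : I ∈ orderIdeals (pentagramPFinset k) pentagramCovers)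
    (hi : 0 ≤ i) (hik : i ≤ k) (hb : 0 ≤ b) (hbk : b ≤ k) :
    ∃ d, (0 ≤ d ∧ i + b - k ≤ d ∧ d ≤ i ∧ d ≤ b) ∧
      ∀ c, cornerPt k i b c ∈ pentagramPFinset k → (cornerPt k i b c ∈ I ↔ d < c) := by
  have hstep : ∀ c, max 0 (i + b - k) < c → c < min i b →
      cornerPt k i b c ∈ I → cornerPt k i b (c + 1) ∈ I := by
    intro c hlo hhi hc
    have hnext : cornerPt k (i + 1) b (c + 1) ∈ I := by
      refine cornerPt_mem_of_neighbor_mem hI (cornerPt_mem_pentagramPFinset.2 (by omega)) ?_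
      simp only [add_sub_cancel_right, hc, or_true]
    exact cornerPt_mem_of_neighbor_mem hI (cornerPt_mem_pentagramPFinset.2 (by omega))
      (Or.inr (Or.inl hnext))
  obtain ⟨d, hlo, hhi, hd⟩ := exists_threshold_of_succ (by omega) hstep
  refine ⟨d, by omega, fun c hc => ?_⟩
  rw [cornerPt_mem_pentagramPFinset] at hc
  exact hd c (by omega) (by omega)

lemma isCornerSum_of_mem_iff (hI : I ∈ orderIdeals (pentagramPFinset k) pentagramCovers)
    (hbounds : ∀ i b, 0 ≤ i → i ≤ k → 0 ≤ b → b ≤ k →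
      0 ≤ C i b ∧ i + b - k ≤ C i b ∧ C i b ≤ i ∧ C i b ≤ b)
    (hmem : ∀ i b c, cornerPt k i b c ∈ pentagramPFinset k → (cornerPt k i b c ∈ I ↔ C i b < c)) :
    IsCornerSum k C := by
  have hmove := fun i b c => cornerPt_mem_of_neighbor_mem (i := i) (b := b) (c := c) hI
  simp only [cornerPt_mem_pentagramPFinset] at hmem hmove
  refine ⟨hbounds, fun i b hi hik hb hbk => ?_, fun i b hi hik hb hbk => ?_⟩
  · have := hbounds i b hi hik hb hbk.le
    have := hbounds i (b + 1) hi hik (by omega) hbk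
    constructor <;> by_contra! hlt
    · have hnext := (hmem i (b + 1) (C i b) (by omega)).2 hlt
      have := (hmem i b (C i b) (by omega)).1 (hmove i b _ (by omega) (Or.inl hnext))
      omega
    · have hprev := (hmem i b (C i b + 1) (by omega)).2 (by omega)
      have := (hmem i (b + 1) (C i b + 1 + 1) (by omega)).1
        (hmove i (b + 1) _ (by omega) (by simp only [add_sub_cancel_right, hprev, true_or,
          or_true]))
      omega
  · have := hbounds i b hi hik.le hb hbk
    have := hbounds (i + 1) b (by omega) hik hb hbk
    constructor <;> by_contra! hlt
    · have hnext := (hmem (i + 1) b (C i b) (by omega)).2 hlt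
      have := (hmem i b (C i b) (by omega)).1 (hmove i b _ (by omega) (Or.inr (Or.inl hnext)))
      omega
    · have hprev := (hmem i b (C i b + 1) (by omega)).2 (by omega)
      have := (hmem (i + 1) b (C i b + 1 + 1) (by omega)).1
        (hmove (i + 1) b _ (by omega) (by simp only [add_sub_cancel_right, hprev, or_true]))
      omega

theorem exists_hasCornerSum (hI : I ∈ orderIdeals (pentagramPFinset k) pentagramCovers) :
    ∃ C, HasCornerSum k I C := by
  have hchain : ∀ i b, ∃ d, 0 ≤ i → i ≤ k → 0 ≤ b → b ≤ k →
      (0 ≤ d ∧ i + b - k ≤ d ∧ d ≤ i ∧ d ≤ b) ∧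
      ∀ c, cornerPt k i b c ∈ pentagramPFinset k → (cornerPt k i b c ∈ I ↔ d < c) := by
    intro i b
    by_cases h : 0 ≤ i ∧ i ≤ k ∧ 0 ≤ b ∧ b ≤ k
    · obtain ⟨hi, hik, hb, hbk⟩ := h
      exact (exists_chain_threshold hI hi hik hb hbk).imp fun d hd _ _ _ _ => hd
    · exact ⟨0, fun hi hik hb hbk => absurd ⟨hi, hik, hb, hbk⟩ h⟩
  choose C hC using hchain
  have hmem : ∀ i b c, cornerPt k i b c ∈ pentagramPFinset k →
      (cornerPt k i b c ∈ I ↔ C i b < c) := fun i b c hP => by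
    have := cornerPt_mem_pentagramPFinset.1 hP
    exact (hC i b (by omega) (by omega) (by omega) (by omega)).2 c hP
  have hbounds := fun i b hi hik hb hbk => (hC i b hi hik hb hbk).1
  exact ⟨C, isCornerSum_of_mem_iff hI hbounds hmem, hmem⟩

/-- The ideal is the largest one with the prescribed elements of `Q_k`: it contains every element of
`Q_{k+1}` above prescribed elements only. -/
theorem IsCornerSum.exists_hasCornerSum (hC : IsCornerSum k C) :
    ∃ I ∈ orderIdeals (pentagramPFinset k) pentagramCovers, HasCornerSum k I C := by
  let I := {x ∈ pentagramPFinset k | ∀ i b c, cornerPt k i b c ∈ pentagramPFinset k →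
    cornerPt k i b c = x ∨ pentagramCovers (cornerPt k i b c) x → C i b < c}
  refine ⟨I, mem_orderIdeals.2 ⟨Finset.filter_subset _ _, fun x hx y hy hxy => ?_⟩, hC, ?_⟩
  · obtain ⟨hyP, hyC⟩ := Finset.mem_filter.1 hy
    refine Finset.mem_filter.2 ⟨hx, fun i b c hP h => ?_⟩
    by_cases hxk : IsCornerPoint k x
    · rcases h with rfl | h
      · exact hyC i b c hP (Or.inr hxy)
      · exact absurd hxk ((isCornerPoint_iff_not_of_covers h).1 (isCornerPoint_cornerPt k i b c))
    · obtain ⟨a, b', c', rfl⟩ := exists_eq_entryPt_of_not_isCornerPoint hx hxk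
      have hlower := h.resolve_left fun h => hxk (h ▸ isCornerPoint_cornerPt k i b c)
      have hentry := entryPt_mem_pentagramPFinset.1 hx
      have := hC.row_step a b' (by omega) (by omega) (by omega) (by omega)
      have := hC.row_step (a + 1) b' (by omega) (by omega) (by omega) (by omega)
      have := hC.col_step a b' (by omega) (by omega) (by omega) (by omega)
      have := hC.col_step a (b' + 1) (by omega) (by omega) (by omega) (by omega)
      simp only [covers_entryPt_iff hP, cornerPt_inj] at hlower
      rcases (entryPt_covers_iff hyP).1 hxy with rfl | rfl <;>
        have := hyC _ _ _ hyP (Or.inl rfl) <;>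
        rcases hlower with ⟨rfl, rfl, rfl⟩ | ⟨rfl, rfl, rfl⟩ <;> omega
  · intro i b c hP
    refine ⟨fun h => (Finset.mem_filter.1 h).2 i b c hP (Or.inl rfl), fun h => ?_⟩
    refine Finset.mem_filter.2 ⟨hP, fun i' b' c' _ h' => ?_⟩
    rcases h' with h' | h'
    · obtain ⟨rfl, rfl, rfl⟩ := cornerPt_inj.1 h'
      exact h
    · exact absurd (isCornerPoint_cornerPt k i b c)
        ((isCornerPoint_iff_not_of_covers h').1 (isCornerPoint_cornerPt k i' b' c'))

lemma isToggleable_entryPt :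
    IsToggleable (pentagramPFinset k) pentagramCovers I (entryPt k a b c) ↔
      entryPt k a b c ∈ pentagramPFinset k ∧
      (cornerPt k (a + 1) b c ∈ pentagramPFinset k → cornerPt k (a + 1) b c ∈ I) ∧
      (cornerPt k a (b + 1) c ∈ pentagramPFinset k → cornerPt k a (b + 1) c ∈ I) ∧
      (cornerPt k (a + 1) (b + 1) c ∈ pentagramPFinset k → cornerPt k (a + 1) (b + 1) c ∉ I) ∧
      (cornerPt k a b (c - 1) ∈ pentagramPFinset k → cornerPt k a b (c - 1) ∉ I) := by
  refine and_congr_right fun _ => ?_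
  rw [← and_assoc]
  refine and_congr ⟨fun h => ⟨fun hP => ?_, fun hP => ?_⟩, fun h y hy hcov => ?_⟩
    ⟨fun h => ⟨fun hP => ?_, fun hP => ?_⟩, fun h y hy hcov => ?_⟩
  · exact h _ hP ((covers_entryPt_iff hP).2 (Or.inl rfl))
  · exact h _ hP ((covers_entryPt_iff hP).2 (Or.inr rfl))
  · rcases (covers_entryPt_iff hy).1 hcov with rfl | rfl
    exacts [h.1 hy, h.2 hy]
  · exact h _ hP ((entryPt_covers_iff hP).2 (Or.inl rfl))
  · exact h _ hP ((entryPt_covers_iff hP).2 (Or.inr rfl))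
  · rcases (entryPt_covers_iff hy).1 hcov with rfl | rfl
    exacts [h.1 hy, h.2 hy]

theorem HasCornerSum.isToggleable_entryPt_iff (h : HasCornerSum k I C) (ha : 0 ≤ a) (hak : a < k)
    (hb : 0 ≤ b) (hbk : b < k) :
    IsToggleable (pentagramPFinset k) pentagramCovers I (entryPt k a b c) ↔
      asmEntry C a b = 1 ∧ c = C a b + 1 := by
  have := h.isCornerSum.bounds a b ha hak.le hb hbk.le
  have := h.isCornerSum.bounds (a + 1) b (by omega) hak hb hbk.le
  have := h.isCornerSum.bounds a (b + 1) ha hak.le (by omega) hbk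
  have := h.isCornerSum.bounds (a + 1) (b + 1) (by omega) hak (by omega) hbk
  have := h.isCornerSum.row_step a b ha hak.le hb hbk
  have := h.isCornerSum.row_step (a + 1) b (by omega) hak hb hbk
  have := h.isCornerSum.col_step a b ha hak hb hbk.le
  have := h.isCornerSum.col_step a (b + 1) ha hak (by omega) hbk
  rw [isToggleable_entryPt]
  simp +contextual only [h.mem_iff]
  simp only [cornerPt_mem_pentagramPFinset, entryPt_mem_pentagramPFinset]
  unfold asmEntry
  omega

lemma not_isCornerPoint_of_mem_markedElements (hS : ∀ n ∈ S, ¬ 2 ∣ n - j - k)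
    (hx : x ∈ markedElements j S) : ¬ IsCornerPoint k x := by
  have := hS _ hx
  unfold IsCornerPoint
  omega

theorem HasCornerSum.isToggleFree_iff (h : HasCornerSum k I C)
    (hS : ∀ n ∈ S, ¬ 2 ∣ n - j - k) :
    IsToggleFree (pentagramPFinset k) pentagramCovers (markedElements j S) I ↔
      HasNoOneOn (markedPositions j k S) C := by
  have hlabel : ∀ a b c, entryPt k a b c ∈ markedElements j S ↔
      4 * a + 2 * b + 3 - 3 * k + j ∈ S := fun a b c => by
    rw [markedElements, Set.mem_ofPred_eq, entryPt, cornerPt]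
    ring_nf
  constructor
  · rintro hfree a b ⟨⟨⟨ha, hak⟩, hb, hbk⟩, hab⟩ hone
    exact hfree _ ((hlabel a b (C a b + 1)).2 hab)
      ((h.isToggleable_entryPt_iff ha hak hb hbk).2 ⟨hone, rfl⟩)
  · intro hno x hx htog
    have hxk := not_isCornerPoint_of_mem_markedElements hS hx
    obtain ⟨a, b, c, rfl⟩ := exists_eq_entryPt_of_not_isCornerPoint htog.1 hxk
    have hP := entryPt_mem_pentagramPFinset.1 htog.1
    have hab : (a, b) ∈ Set.Ico 0 k ×ˢ Set.Ico 0 k := by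
      simp only [Set.mem_prod, Set.mem_Ico]
      omega
    exact hno a b ⟨hab, (hlabel a b c).1 hx⟩
      ((h.isToggleable_entryPt_iff hab.1.1 hab.1.2 hab.2.1 hab.2.2).1 htog).1

end Coordinates

/-! ### Restricted F-polynomials -/

section Restriction

variable {j k : ℤ} {S : Set ℤ}

/-- Sends the variables labelling `Q_k` to one indeterminate, which counts the elements of `Q_k` in
an ideal, and the other variables to `1`. -/
def collapseLabels (j k : ℤ) : MvPolynomial ℤ ℤ →ₐ[ℤ] Polynomial ℤ :=
  MvPolynomial.aeval fun n => if 2 ∣ n - j - k then Polynomial.X else 1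

lemma collapseLabels_substNeg_X (hS : ∀ n ∈ S, ¬ 2 ∣ n - j - k) (x : ℤ × ℤ × ℤ) :
    collapseLabels j k (substNeg S (X (3 * x.1 + x.2.1 + j))) =
      signedWeight (IsCornerPoint k) (markedElements j S) x := by
  have hcorner : 2 ∣ 3 * x.1 + x.2.1 + j - j - k ↔ IsCornerPoint k x := by
    unfold IsCornerPoint
    omega
  have hmark : x ∈ markedElements j S ↔ 3 * x.1 + x.2.1 + j ∈ S := Iff.rfl
  simp only [collapseLabels, substNeg, signedWeight, hmark, AlgHom.toRingHom_eq_coe,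
    RingHom.coe_coe, aeval_X]
  split_ifs with hxS hxk hxk
  · exact absurd (hcorner.2 hxk) (hS _ hxS)
  · rw [map_neg, map_one]
  · rw [aeval_X, if_pos (hcorner.2 hxk)]
  · rw [aeval_X, if_neg (hcorner.not.2 hxk)]

theorem substNeg_pentagramF_ne_zero (hS : ∀ n ∈ S, ¬ 2 ∣ n - j - k)
    (hT : JoinsRowEnds k (markedPositions j k S) ∨
      JoinsRowEnds k (Prod.swap ⁻¹' markedPositions j k S))
    {π : ℤ → ℤ} (hmaps : Set.MapsTo π (Set.Ico 0 k) (Set.Ico 0 k))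
    (hinj : Set.InjOn π (Set.Ico 0 k)) (hπ : ∀ b, (π b, b) ∉ markedPositions j k S) :
    substNeg S (pentagramF j k) ≠ 0 := by
  have hA := fun x => not_isCornerPoint_of_mem_markedElements (x := x) hS
  have hbox : markedPositions j k S ⊆ Set.Ico 0 k ×ˢ Set.Ico 0 k := fun _ hp => hp.1
  have hnonzero := sum_signedWeight_ne_zero (P := pentagramPFinset k) (r := pentagramCovers)
    (fun _ _ => isCornerPoint_iff_not_of_covers) hA ?_ ?_
  · intro hzero
    apply hnonzero
    have himage := congrArg (collapseLabels j k) hzero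
    simpa only [pentagramF_eq_sum_orderIdeals, map_sum, map_prod, collapseLabels_substNeg_X hS,
      map_zero] using himage
  · obtain ⟨I, hI, hIC⟩ := (isCornerSum_permCornerSum hmaps hinj).exists_hasCornerSum
    refine ⟨I, hI, (hIC.isToggleFree_iff hS).2 fun a b hab hone => hπ b ?_⟩
    rw [asmEntry_permCornerSum π a (hbox hab).2.1, ite_eq_left_iff] at hone
    have hπb : π b = a := not_not.1 fun hne => zero_ne_one (hone hne)
    rwa [hπb]
  · intro I hI J hJ hIfree hJfree
    obtain ⟨C, hC⟩ := exists_hasCornerSum hI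
    obtain ⟨D, hD⟩ := exists_hasCornerSum hJ
    have hCT := (hC.isToggleFree_iff hS).1 hIfree
    have hDT := (hD.isToggleFree_iff hS).1 hJfree
    refine ((hC.inter hD).isToggleFree_iff hS).2 ?_
    rcases hT with hT | hT
    · exact hCT.max_of_joinsRowEnds hC.isCornerSum hD.isCornerSum hbox hT hDT
    · exact hCT.max_of_joinsColEnds hC.isCornerSum hD.isCornerSum hbox hT hDT

end Restriction

section Progressions

variable {j k : ℤ}

lemma mem_markedPositions_AP {u v d a b : ℤ} :
    (a, b) ∈ markedPositions j k (AP u v d) ↔ ((0 ≤ a ∧ a < k) ∧ 0 ≤ b ∧ b < k) ∧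
      u ≤ 4 * a + 2 * b + 3 - 3 * k + j ∧ 4 * a + 2 * b + 3 - 3 * k + j ≤ v ∧
      d ∣ 4 * a + 2 * b + 3 - 3 * k + j - u :=
  Iff.rfl

/-- The marked positions in a row `a < p` form a segment ending at the right end, those in the other
rows a segment starting at the left end. The permutation reversing the first `p` columns among
themselves, and the last `k - p` likewise, avoids them. -/
theorem substNeg_AP_two_ne_zero {p u v : ℤ} (hp : 0 ≤ p) (hpk : p ≤ k)
    (hpar : 2 ∣ u - j - k - 1) (hlo : 4 * p + 1 ≤ u - j + 3 * k) (hlo' : u - j + 3 * k ≤ 4 * p + 3)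
    (hhi : 4 * p - 3 ≤ v - j + k) (hhi' : v - j + k ≤ 4 * p - 1) :
    substNeg (AP u v 2) (pentagramF j k) ≠ 0 := by
  refine substNeg_pentagramF_ne_zero (π := fun b => if b < p then p - 1 - b else p + k - 1 - b)
    ?_ (Or.inl fun a b hab => ?_) (fun b hb => ?_) (fun b hb b' hb' heq => ?_) (fun b hab => ?_)
  · rintro n ⟨-, -, hn⟩
    omega
  · simp only [mem_markedPositions_AP] at hab ⊢
    rcases lt_or_ge a p with hap | hap
    · exact Or.inr fun b' hbb' hb'k => by omega
    · exact Or.inl fun b' hb' hb'b => by omega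
  · simp only [Set.mem_Ico] at hb ⊢
    omega
  · simp only [Set.mem_Ico] at hb hb' heq
    omega
  · rw [mem_markedPositions_AP] at hab
    omega

/-- The marked positions in a column `b < m` form a segment ending at the bottom, those in the other
columns a segment starting at the top; they lie in the columns with `b ≡ m (mod 2)`. -/
theorem substNeg_AP_four_ne_zero {m : ℤ} (hm : 0 ≤ m) (hmk : m ≤ k + 1) :
    substNeg (AP (j + 2 * m - 3 * k + 3) (j + 2 * m + k - 5) 4) (pentagramF j k) ≠ 0 := by
  refine substNeg_pentagramF_ne_zero (π := fun b =>
      if 2 ∣ m - b then if b < m then (m - b) / 2 - 1 else (m - b) / 2 - 1 + k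
      else (m + b - 1) / 2)
    ?_ (Or.inr fun b a hab => ?_) (fun b hb => ?_) (fun b hb b' hb' heq => ?_) (fun b hab => ?_)
  · rintro n ⟨-, -, hn⟩
    omega
  · simp only [Set.mem_preimage, Prod.swap_prod_mk, mem_markedPositions_AP] at hab ⊢
    rcases lt_or_ge b m with hbm | hbm
    · exact Or.inr fun a' haa' ha'k => by omega
    · exact Or.inl fun a' ha' ha'a => by omega
  · simp only [Set.mem_Ico] at hb ⊢
    omega
  · simp only [Set.mem_Ico] at hb hb' heq
    omega
  · rw [mem_markedPositions_AP] at hab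
    omega

end Progressions

theorem stmt3 (j k l : ℤ) (hk : 1 ≤ k) (hl : |l| ≤ k + 1) (hpar : (2 : ℤ) ∣ (l - (k + 1)))
    (S : Set ℤ)
    (hS : S = AP (j + l - 2 * k + 4) (j + l + 2 * k - 4) 4 ∨
          S = AP (j + l - 2 * k + 2) (j + l + pentagramSigma k l - 2) 2 ∨
          S = AP (j + l + pentagramSigma k l + 2) (j + l + 2 * k - 2) 2) :
    substNeg S (pentagramF j k) ≠ 0 := by
  obtain ⟨hl, hl'⟩ := abs_le.1 hl
  unfold pentagramSigma at hS
  rcases hS with rfl | rfl | rfl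
  · obtain ⟨m, rfl⟩ : ∃ m, l = 2 * m - k - 1 := ⟨(l + k + 1) / 2, by omega⟩
    convert substNeg_AP_four_ne_zero (j := j) (k := k) (m := m) (by omega) (by omega)
      using 4 <;> ring
  · apply substNeg_AP_two_ne_zero (p := (l + k + 1) / 4) <;> omega
  · apply substNeg_AP_two_ne_zero (p := (l + 3 * k + 1) / 4) <;> omega

end
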